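/- Let the candidate set be C = {a_{m1}, ..., a_1, p, b_1, ..., b_{m2}} with m = m1 + m2 + 1 candidates, and let the axis be a_{m1} L ... L a_1 L p L b_1 L ... L b_{m2}, with m1 ≥ 1 and m2 ≥ 1. Let α = ⟨α1,...,αm⟩ be an m-candidate scoring vector such that for all i, j with 1 < i ≤ m1+1 and 1 < j ≤ m2+1 it holds that (α1 − αi)(α1 − αj) ≤ (αi − α_{i+1})(αj − α_{j+1}). Fix any one of the four scoring-rule extensions (min, max, round down, average). Then for every finite weighted collection S of voters whose votes are weak orders each single-plateaued with respect to L, either score_S(a_i) ≤ score_S(p) for all i with 1 ≤ i ≤ m1, or score_S(b_j) ≤ score_S(p) for all j with 1 ≤ j ≤ m2. -/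

import Mathlib

open scoped Classical

section Defs

variable {C : Type*}

/-- Strict preference: `a` is strictly preferred to `b` in the vote `v`. -/
def SPref (v : C → C → Prop) (a b : C) : Prop := v a b ∧ ¬ v b a

/-- Indifference (a tie) between `a` and `b` in the vote `v`. -/
def Indiff (v : C → C → Prop) (a b : C) : Prop := v a b ∧ v b a

/-- A weak order: a complete (hence reflexive) and transitive binary relation. -/
def IsWeakOrder (v : C → C → Prop) : Prop := (∀ a b, v a b ∨ v b a) ∧ Transitive v

/-- A total (linear) order: an antisymmetric weak order. -/
def IsTotalOrderRel (v : C → C → Prop) : Prop :=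
  IsWeakOrder v ∧ ∀ a b, v a b → v b a → a = b

/-- A top order: a weak order all of whose ties are within the least-preferred
indifference class. -/
def IsTopOrder (v : C → C → Prop) : Prop :=
  IsWeakOrder v ∧ ∀ a b, a ≠ b → Indiff v a b → ∀ c, v c a

/-- `c` is among the most preferred candidates of `v`. -/
def TopCand (v : C → C → Prop) (c : C) : Prop := ∀ d, v c d

/-- `v` is single-peaked w.r.t. the axis `A`: there is a peak `p` (which is then the
unique most preferred candidate) such that `v` is strictly increasing along the part of
the axis up to `p` and strictly decreasing along the part of the axis after `p`. -/
def IsSinglePeaked (A : LinearOrder C) (v : C → C → Prop) : Prop :=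
  ∃ p : C, (∀ a b, A.lt a b → A.le b p → SPref v b a) ∧
           (∀ a b, A.le p a → A.lt a b → SPref v a b)

/-- `v` is single-plateaued w.r.t. the axis `A`: the axis splits into segments `X,Y,Z`
where the interval `Y = [y₁, y₂]` consists exactly of the most preferred candidates,
`v` is strictly increasing along `X` and strictly decreasing along `Z`. -/
def IsSinglePlateaued (A : LinearOrder C) (v : C → C → Prop) : Prop :=
  ∃ y₁ y₂ : C, A.le y₁ y₂ ∧ (∀ c, (A.le y₁ c ∧ A.le c y₂) ↔ TopCand v c) ∧
    (∀ a b, A.lt a b → A.le b y₁ → SPref v b a) ∧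
    (∀ a b, A.le y₂ a → A.lt a b → SPref v a b)

/-- `v` is possibly single-peaked w.r.t. the axis `A`: `v` is weakly increasing along
the axis up to some point `p` and weakly decreasing afterwards (so the most preferred
candidates form an interval `Y` around `p`). -/
def IsPossiblySinglePeaked (A : LinearOrder C) (v : C → C → Prop) : Prop :=
  ∃ p : C, (∀ a b, A.lt a b → A.le b p → v b a) ∧
           (∀ a b, A.le p a → A.lt a b → v a b)

/-- `v` is single-peaked with outside options w.r.t. the axis `A`: the axis splits into
segments `O₁,X,Y,Z,O₂` where the inner interval `[l,r]` (split into `X`, the peak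
`Y = {p}`, and `Z`) is single-peaked, every inner candidate is strictly preferred to
every outside candidate, and all outside candidates are mutually indifferent. -/
def IsSPOutsideOptions (A : LinearOrder C) (v : C → C → Prop) : Prop :=
  ∃ l p r : C, A.le l p ∧ A.le p r ∧
    (∀ a b, A.le l a → A.lt a b → A.le b p → SPref v b a) ∧
    (∀ a b, A.le p a → A.lt a b → A.le b r → SPref v a b) ∧
    (∀ a b, A.le l a → A.le a r → ¬ (A.le l b ∧ A.le b r) → SPref v a b) ∧
    (∀ a b, ¬ (A.le l a ∧ A.le a r) → ¬ (A.le l b ∧ A.le b r) → Indiff v a b)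

/-- The number of candidates strictly preferred to `c` (the `k_i` of `c`'s class). -/
noncomputable def aboveCount [Fintype C] (v : C → C → Prop) (c : C) : ℕ :=
  Nat.card {d : C // SPref v d c}

/-- The size of `c`'s indifference class (including `c` itself). -/
noncomputable def tiedCount [Fintype C] (v : C → C → Prop) (c : C) : ℕ :=
  Nat.card {d : C // Indiff v d c}

/-- The number of indifference classes strictly below `c`'s class. -/
noncomputable def classesBelow [Fintype C] (v : C → C → Prop) (c : C) : ℕ :=
  Set.ncard ((fun d => aboveCount v d) '' {d : C | SPref v c d})

/-- An `m`-candidate scoring vector, indexed by positions `1..m`: `α 1 ≥ α 2 ≥ ... ≥ α m`. -/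
def IsScoringVec (m : ℕ) (α : ℕ → ℕ) : Prop :=
  ∀ i j, 1 ≤ i → i ≤ j → j ≤ m → α j ≤ α i

/-- The four scoring-rule extensions: min, max, round down, and average. -/
inductive ScoreExt : Type
  | emin | emax | eroundDown | eaverage

/-- The score of candidate `c` in a weak-order vote `v` under the scoring vector `α`
(for `m` candidates) with scoring-rule extension `E`: writing the vote as indifference
classes `G₁ > ... > G_r` and `k_i = |G₁| + ... + |G_{i-1}|`, a candidate in `G_i` scores
`α (k_i + |G_i|)` under min, `α (k_i + 1)` under max, `α (m - r + i)` under round down,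
and `(α (k_i + 1) + ... + α (k_i + |G_i|)) / |G_i|` under average. -/
noncomputable def extScore [Fintype C] (m : ℕ) (α : ℕ → ℕ) (E : ScoreExt)
    (v : C → C → Prop) (c : C) : ℚ :=
  match E with
  | .emin => α (aboveCount v c + tiedCount v c)
  | .emax => α (aboveCount v c + 1)
  | .eroundDown => α (m - classesBelow v c)
  | .eaverage =>
      (∑ j ∈ Finset.Icc (aboveCount v c + 1) (aboveCount v c + tiedCount v c), (α j : ℚ))
        / (tiedCount v c : ℚ)

/-- The total weighted score of candidate `c` for a weighted profile `S`
(a list of weight/vote pairs). -/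
noncomputable def profScore [Fintype C] (m : ℕ) (α : ℕ → ℕ) (E : ScoreExt)
    (S : List (ℕ × (C → C → Prop))) (c : C) : ℚ :=
  (S.map (fun wv => (wv.1 : ℚ) * extScore m α E wv.2 c)).sum

/-- The total weight of the voters in `S` strictly preferring `a` to `b`. -/
noncomputable def prefWeight (S : List (ℕ × (C → C → Prop))) (a b : C) : ℕ :=
  (S.map (fun wv => if SPref wv.2 a b then wv.1 else 0)).sum

end Defs

section WeakOrderCounts

variable {C : Type*} {v : C → C → Prop} {p d : C}

lemma IsWeakOrder.refl (hv : IsWeakOrder v) (a : C) : v a a := (hv.1 a a).elim id id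

lemma IsWeakOrder.trans (hv : IsWeakOrder v) {a b c : C} (h : v a b) (h' : v b c) : v a c :=
  hv.2 h h'

variable [Fintype C]

lemma tiedCount_pos (hv : IsWeakOrder v) (c : C) : 1 ≤ tiedCount v c := by
  have : Nonempty {d : C // Indiff v d c} := ⟨⟨c, hv.refl c, hv.refl c⟩⟩
  exact Nat.card_pos

lemma aboveCount_eq_ncard (v : C → C → Prop) (c : C) :
    aboveCount v c = Set.ncard {d | SPref v d c} := rfl

lemma tiedCount_eq_ncard (v : C → C → Prop) (c : C) :
    tiedCount v c = Set.ncard {d | Indiff v d c} := rfl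

lemma aboveCount_add_tiedCount (v : C → C → Prop) (c : C) :
    aboveCount v c + tiedCount v c = Set.ncard {d | v d c} := by
  rw [aboveCount_eq_ncard, tiedCount_eq_ncard, ← Set.ncard_union_eq]
  · congr 1
    ext d
    simp only [SPref, Indiff, Set.mem_union, Set.mem_ofPred_eq]
    tauto
  · rw [Set.disjoint_left]
    rintro x hx hx'
    exact hx.2 hx'.2

lemma aboveCount_add_tiedCount_add_below (hv : IsWeakOrder v) (c : C) :
    aboveCount v c + tiedCount v c + Set.ncard {d | SPref v c d} = Fintype.card C := by
  rw [aboveCount_add_tiedCount, ← Set.ncard_union_eq, ← Nat.card_eq_fintype_card,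
    ← Set.ncard_univ]
  · congr 1
    ext d
    have := hv.1 c d
    simp only [SPref, Set.mem_union, Set.mem_ofPred_eq, Set.mem_univ, iff_true]
    tauto
  · rw [Set.disjoint_left]
    rintro x hx hx'
    exact hx'.2 hx

lemma aboveCount_add_tiedCount_le (hv : IsWeakOrder v) (h : SPref v p d) :
    aboveCount v p + tiedCount v p ≤ aboveCount v d := by
  rw [aboveCount_add_tiedCount, aboveCount_eq_ncard]
  refine Set.ncard_le_ncard (fun x hx => ?_) (Set.toFinite _)
  exact ⟨hv.trans hx h.1, fun h' => h.2 (hv.trans h' hx)⟩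

lemma aboveCount_lt (hv : IsWeakOrder v) (h : SPref v p d) : aboveCount v p < aboveCount v d := by
  have := aboveCount_add_tiedCount_le hv h
  have := tiedCount_pos hv p
  omega

lemma classesBelow_le_ncard (v : C → C → Prop) (c : C) :
    classesBelow v c ≤ Set.ncard {d | SPref v c d} := Set.ncard_image_le (Set.toFinite _)

lemma classesBelow_lt (hv : IsWeakOrder v) (h : SPref v p d) :
    classesBelow v d < classesBelow v p := by
  refine Set.ncard_lt_ncard ?_ (Set.toFinite _)
  refine (Set.ssubset_iff_of_subset ?_).2 ⟨aboveCount v d, ⟨d, h, rfl⟩, ?_⟩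
  · rintro _ ⟨x, hx, rfl⟩
    exact ⟨x, ⟨hv.trans h.1 hx.1, fun h' => hx.2 (hv.trans h' h.1)⟩, rfl⟩
  · rintro ⟨x, hx, hxd⟩
    exact (aboveCount_lt hv hx).ne' hxd

/-- A set of pairwise strictly compared candidates below `p` contributes distinct classes. -/
lemma card_le_classesBelow (hv : IsWeakOrder v) {B : Finset C} (hB : ∀ b ∈ B, SPref v p b)
    (hne : ∀ b ∈ B, ∀ c ∈ B, b ≠ c → SPref v b c ∨ SPref v c b) :
    B.card ≤ classesBelow v p := by
  have hinj : Set.InjOn (fun d => aboveCount v d) (B : Set C) := by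
    intro b hb c hc hbc
    by_contra hn
    rcases hne b hb c hc hn with h | h
    · exact (aboveCount_lt hv h).ne hbc
    · exact (aboveCount_lt hv h).ne' hbc
  rw [← Set.ncard_coe_finset, ← hinj.ncard_image]
  exact Set.ncard_le_ncard (Set.image_mono hB) (Set.toFinite _)

lemma tiedCount_le_two (h : ∀ c d, Indiff v c p → Indiff v d p → c ≠ p → d ≠ p → c = d) :
    tiedCount v p ≤ 2 := by
  have h1 : Set.ncard ({d | Indiff v d p} \ {p}) ≤ 1 := by
    rw [Set.ncard_le_one (Set.toFinite _)]
    rintro a ⟨ha, ha'⟩ b ⟨hb, hb'⟩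
    exact h a b ha hb ha' hb'
  have h2 := Set.ncard_le_ncard_sdiff_add_ncard {d | Indiff v d p} {p} (Set.toFinite _)
  rw [Set.ncard_singleton] at h2
  rw [tiedCount_eq_ncard]
  omega

lemma extScore_eq_of_indiff (hv : IsWeakOrder v) (h : Indiff v p d) (m : ℕ) (α : ℕ → ℕ)
    (E : ScoreExt) : extScore m α E v p = extScore m α E v d := by
  have hl : ∀ x, v x p ↔ v x d := fun x => ⟨fun hx => hv.trans hx h.1, fun hx => hv.trans hx h.2⟩
  have hr : ∀ x, v p x ↔ v d x := fun x => ⟨fun hx => hv.trans h.2 hx, fun hx => hv.trans h.1 hx⟩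
  have h1 : aboveCount v p = aboveCount v d := by simp only [aboveCount, SPref, hl, hr]
  have h2 : tiedCount v p = tiedCount v d := by simp only [tiedCount, Indiff, hl, hr]
  have h3 : classesBelow v p = classesBelow v d := by simp only [classesBelow, SPref, hl, hr]
  simp only [extScore, h1, h2, h3]

end WeakOrderCounts

section Scores

variable {C : Type*} [Fintype C] {v : C → C → Prop} {p d : C} {m : ℕ} {α : ℕ → ℕ}

lemma average_le_first (hα : IsScoringVec m α) {k t : ℕ} (ht : 1 ≤ t) (hkt : k + t ≤ m) :
    (∑ j ∈ Finset.Icc (k + 1) (k + t), (α j : ℚ)) / (t : ℚ) ≤ α (k + 1) := by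
  have h := Finset.sum_le_card_nsmul (Finset.Icc (k + 1) (k + t)) (fun j => (α j : ℚ))
    (α (k + 1)) fun j hj => by
      rw [Finset.mem_Icc] at hj
      exact_mod_cast hα (k + 1) j (by omega) hj.1 (by omega)
  rw [Nat.card_Icc, show k + t + 1 - (k + 1) = t by omega, nsmul_eq_mul] at h
  rw [div_le_iff₀ (by exact_mod_cast ht)]
  linarith

lemma extScore_le_first (hα : IsScoringVec m α) (hv : IsWeakOrder v) (hC : Fintype.card C = m)
    (E : ScoreExt) (c : C) : extScore m α E v c ≤ α 1 := by
  have h1 := tiedCount_pos hv c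
  have h2 := aboveCount_add_tiedCount_add_below hv c
  have h3 := classesBelow_le_ncard v c
  cases E
  · exact Nat.cast_le.2 (hα _ _ le_rfl (by omega) (by omega))
  · exact Nat.cast_le.2 (hα _ _ le_rfl (by omega) (by omega))
  · exact Nat.cast_le.2 (hα _ _ le_rfl (by omega) (by omega))
  · refine (average_le_first hα h1 (by omega)).trans ?_
    exact Nat.cast_le.2 (hα _ _ le_rfl (by omega) (by omega))

/-- The score of a candidate strictly below `p` under average, bounded by the position
just after the class of `p`. -/
lemma average_le_of_sPref (hα : IsScoringVec m α) (hv : IsWeakOrder v)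
    (hC : Fintype.card C = m) (h : SPref v p d) :
    extScore m α .eaverage v d ≤ α (aboveCount v p + tiedCount v p + 1) := by
  have h1 := tiedCount_pos hv d
  have h2 := aboveCount_add_tiedCount_add_below hv d
  have h3 := aboveCount_add_tiedCount_le hv h
  refine (average_le_first hα h1 (by omega)).trans ?_
  exact Nat.cast_le.2 (hα _ _ (by omega) (by omega) (by omega))

/-- If the class of `p` has at most two members and `p` is not most preferred, then the score
differences around `p` are controlled by averages of differences of the scoring vector. -/
lemma exists_positions_of_not_top (hα : IsScoringVec m α) (hv : IsWeakOrder v)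
    (hC : Fintype.card C = m) (E : ScoreExt) {M : ℕ} {B : Finset C}
    (hB : ∀ b ∈ B, SPref v p b)
    (hne : ∀ b ∈ B, ∀ c ∈ B, b ≠ c → SPref v b c ∨ SPref v c b)
    (hcard : B.card + (M + 1) = m) (htied : tiedCount v p ≤ 2) {t : C} (ht : SPref v t p)
    (c : C) (hd : SPref v p d) :
    ∃ i i', (1 < i ∧ i ≤ M + 1) ∧ (1 < i' ∧ i' ≤ M + 1) ∧
      2 * (extScore m α E v c - extScore m α E v p) ≤
        ((α 1 : ℚ) - α i) + ((α 1 : ℚ) - α i') ∧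
      ((α i : ℚ) - α (i + 1)) + ((α i' : ℚ) - α (i' + 1)) ≤
        2 * (extScore m α E v p - extScore m α E v d) := by
  have htop := extScore_le_first hα hv hC E c
  have h1 := tiedCount_pos hv p
  have h2 := aboveCount_add_tiedCount_add_below hv p
  have h3 := aboveCount_lt hv ht
  have h4 := aboveCount_add_tiedCount_le hv hd
  have h5 := tiedCount_pos hv d
  have h6 := aboveCount_add_tiedCount_add_below hv d
  have h7 := classesBelow_le_ncard v p
  have h8 := classesBelow_lt hv hd
  have h9 := card_le_classesBelow hv hB hne
  have single : ∀ i, 1 < i → i ≤ M + 1 → extScore m α E v p = α i →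
      extScore m α E v d ≤ α (i + 1) → ∃ i i', (1 < i ∧ i ≤ M + 1) ∧ (1 < i' ∧ i' ≤ M + 1) ∧
        2 * (extScore m α E v c - extScore m α E v p) ≤
          ((α 1 : ℚ) - α i) + ((α 1 : ℚ) - α i') ∧
        ((α i : ℚ) - α (i + 1)) + ((α i' : ℚ) - α (i' + 1)) ≤
          2 * (extScore m α E v p - extScore m α E v d) := by
    intro i hi hi' hp hdi
    exact ⟨i, i, ⟨hi, hi'⟩, ⟨hi, hi'⟩, by linarith, by linarith⟩
  cases E
  · refine single (aboveCount v p + tiedCount v p) (by omega) (by omega) rfl ?_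
    exact Nat.cast_le.2 (hα _ _ (by omega) (by omega) (by omega))
  · refine single (aboveCount v p + 1) (by omega) (by omega) rfl ?_
    exact Nat.cast_le.2 (hα _ _ (by omega) (by omega) (by omega))
  · refine single (m - classesBelow v p) (by omega) (by omega) rfl ?_
    exact Nat.cast_le.2 (hα _ _ (by omega) (by omega) (by omega))
  · have hdle := average_le_of_sPref hα hv hC hd
    obtain htp | htp : tiedCount v p = 1 ∨ tiedCount v p = 2 := by omega
    · refine single (aboveCount v p + 1) (by omega) (by omega) ?_ ?_
      · simp [extScore, htp]
      · rwa [htp] at hdle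
    · have hp : extScore m α .eaverage v p =
          ((α (aboveCount v p + 1) : ℚ) + α (aboveCount v p + 2)) / 2 := by
        simp only [extScore, htp]
        rw [Finset.sum_Icc_succ_top (by omega)]
        simp
      rw [htp] at hdle
      have hmono : (α (aboveCount v p + 2 + 1) : ℚ) ≤ α (aboveCount v p + 2) := by
        exact Nat.cast_le.2 (hα _ _ (by omega) (by omega) (by omega))
      refine ⟨aboveCount v p + 1, aboveCount v p + 2, ⟨by omega, by omega⟩,
        ⟨by omega, by omega⟩, by linarith, ?_⟩
      rw [show aboveCount v p + 1 + 1 = aboveCount v p + 2 by omega]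
      linarith

lemma extScore_le_of_topCand (hα : IsScoringVec m α) (hv : IsWeakOrder v)
    (hC : Fintype.card C = m) (E : ScoreExt) (hp : TopCand v p) (c : C) :
    extScore m α E v c ≤ extScore m α E v p := by
  by_cases hc : v c p
  · exact (extScore_eq_of_indiff hv ⟨hc, hp c⟩ m α E).le
  have h : SPref v p c := ⟨hp c, hc⟩
  have h1 := tiedCount_pos hv p
  have h2 := aboveCount_add_tiedCount_add_below hv p
  have h4 := aboveCount_add_tiedCount_le hv h
  have h5 := tiedCount_pos hv c
  have h6 := aboveCount_add_tiedCount_add_below hv c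
  have h7 := classesBelow_le_ncard v p
  have h8 := classesBelow_lt hv h
  cases E
  · exact Nat.cast_le.2 (hα _ _ (by omega) (by omega) (by omega))
  · exact Nat.cast_le.2 (hα _ _ (by omega) (by omega) (by omega))
  · exact Nat.cast_le.2 (hα _ _ (by omega) (by omega) (by omega))
  · refine (average_le_of_sPref hα hv hC h).trans ?_
    simp only [extScore]
    rw [le_div_iff₀ (by exact_mod_cast h1)]
    have := Finset.card_nsmul_le_sum
      (Finset.Icc (aboveCount v p + 1) (aboveCount v p + tiedCount v p)) (fun j => (α j : ℚ))
      (α (aboveCount v p + tiedCount v p + 1)) fun j hj => by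
        rw [Finset.mem_Icc] at hj
        exact_mod_cast hα j _ (by omega) (by omega) (by omega)
    rw [Nat.card_Icc, Nat.add_sub_add_right, Nat.add_sub_cancel_left, nsmul_eq_mul] at this
    linarith

end Scores

/-- The nonnegative pairs `(x, y)` with `x * x' ≤ y * y'` for all `(x', y')` in `P`. -/
def crossPolar (P : Set (ℚ × ℚ)) : Set (ℚ × ℚ) :=
  {q | 0 ≤ q.1 ∧ 0 ≤ q.2 ∧ ∀ r ∈ P, q.1 * r.1 ≤ q.2 * r.2}

lemma zero_mem_crossPolar (P : Set (ℚ × ℚ)) : (0 : ℚ × ℚ) ∈ crossPolar P := by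
  simp [crossPolar]

lemma add_mem_crossPolar {P : Set (ℚ × ℚ)} {q r : ℚ × ℚ} (hq : q ∈ crossPolar P)
    (hr : r ∈ crossPolar P) : q + r ∈ crossPolar P := by
  refine ⟨add_nonneg hq.1 hr.1, add_nonneg hq.2.1 hr.2.1, fun s hs => ?_⟩
  have h1 := hq.2.2 s hs
  have h2 := hr.2.2 s hs
  simp only [Prod.fst_add, Prod.snd_add]
  linarith

lemma smul_mem_crossPolar {P : Set (ℚ × ℚ)} {q : ℚ × ℚ} {w : ℚ} (hw : 0 ≤ w)
    (hq : q ∈ crossPolar P) : w • q ∈ crossPolar P := by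
  refine ⟨mul_nonneg hw hq.1, mul_nonneg hw hq.2.1, fun s hs => ?_⟩
  have h1 := mul_le_mul_of_nonneg_left (hq.2.2 s hs) hw
  simp only [Prod.smul_fst, Prod.smul_snd, smul_eq_mul]
  linarith

/-- Each summand either is nonpositive in both coordinates, or trades a gain in the first
for a loss in the second coordinate at a rate from `crossPolar P`, or conversely at a rate from
`crossPolar (crossPolar P)`; then the two weighted sums are not both positive. -/
lemma weighted_sum_nonpos_or {ι : Type*} (P : Set (ℚ × ℚ)) (S : List (ℕ × ι)) (f g : ι → ℚ)
    (h : ∀ s ∈ S, (f s.2 ≤ 0 ∧ g s.2 ≤ 0) ∨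
      (∃ q ∈ crossPolar P, f s.2 ≤ q.1 ∧ g s.2 ≤ -q.2) ∨
      (∃ q ∈ crossPolar (crossPolar P), f s.2 ≤ -q.2 ∧ g s.2 ≤ q.1)) :
    (S.map fun s => (s.1 : ℚ) * f s.2).sum ≤ 0 ∨ (S.map fun s => (s.1 : ℚ) * g s.2).sum ≤ 0 := by
  have key : ∃ q ∈ crossPolar P, ∃ r ∈ crossPolar (crossPolar P),
      (S.map fun s => (s.1 : ℚ) * f s.2).sum ≤ q.1 - r.2 ∧
      (S.map fun s => (s.1 : ℚ) * g s.2).sum ≤ r.1 - q.2 := by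
    induction S with
    | nil => exact ⟨0, zero_mem_crossPolar _, 0, zero_mem_crossPolar _, by simp, by simp⟩
    | cons s S ih =>
      obtain ⟨q, hq, r, hr, h1, h2⟩ := ih fun s hs => h s (List.mem_cons_of_mem _ hs)
      have hw : (0 : ℚ) ≤ s.1 := Nat.cast_nonneg _
      simp only [List.map_cons, List.sum_cons]
      rcases h s List.mem_cons_self with ⟨hf, hg⟩ | ⟨x, hx, hf, hg⟩ | ⟨x, hx, hf, hg⟩ <;>
        have hf := mul_le_mul_of_nonneg_left hf hw <;>
        have hg := mul_le_mul_of_nonneg_left hg hw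
      · exact ⟨q, hq, r, hr, by linarith, by linarith⟩
      · refine ⟨_, add_mem_crossPolar (smul_mem_crossPolar hw hx) hq, r, hr, ?_, ?_⟩ <;>
          simp <;> linarith
      · refine ⟨q, hq, _, add_mem_crossPolar (smul_mem_crossPolar hw hx) hr, ?_, ?_⟩ <;>
          simp <;> linarith
  obtain ⟨q, hq, r, hr, h1, h2⟩ := key
  by_contra! hpos
  have hqr := hr.2.2 q hq
  have := mul_lt_mul'' (show r.2 < q.1 by linarith) (show q.2 < r.1 by linarith) hr.2.1 hq.2.1
  linarith

lemma profScore_sub {C : Type*} [Fintype C] (m : ℕ) (α : ℕ → ℕ) (E : ScoreExt)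
    (S : List (ℕ × (C → C → Prop))) (c d : C) :
    profScore m α E S c - profScore m α E S d =
      (S.map fun s => (s.1 : ℚ) * (extScore m α E s.2 c - extScore m α E s.2 d)).sum := by
  unfold profScore
  induction S with
  | nil => simp
  | cons s S ih =>
    simp only [List.map_cons, List.sum_cons] at ih ⊢
    linarith

section Plateau

variable {m : ℕ} {v : Fin m → Fin m → Prop} {y₁ y₂ p : Fin m}

/-- When the plateau lies to the left of `p`, at most one other candidate ties with `p`. -/
lemma tiedCount_le_two_of_plateau_lt (htop : ∀ c, (y₁ ≤ c ∧ c ≤ y₂) ↔ TopCand v c)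
    (hinc : ∀ a b, a < b → b ≤ y₁ → SPref v b a)
    (hdec : ∀ a b, y₂ ≤ a → a < b → SPref v a b)
    (hv : IsWeakOrder v) (hp : y₂ < p) : tiedCount v p ≤ 2 := by
  have htied : ∀ c, Indiff v c p → c ≠ p → c < y₁ := by
    intro c hc hcp
    by_contra! hcy
    rcases lt_or_ge y₂ c with h | h
    · rcases lt_or_gt_of_ne hcp with h' | h'
      · exact (hdec c p h.le h').2 hc.2
      · exact (hdec p c hp.le h').2 hc.1
    · have ht := (htop c).1 ⟨hcy, h⟩
      exact absurd ((htop p).2 fun x => hv.trans hc.2 (ht x)).2 (not_le.2 hp)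
  refine tiedCount_le_two fun c d hc hd hcp hdp => ?_
  have hcd : v c d := hv.trans hc.1 hd.2
  have hdc : v d c := hv.trans hd.1 hc.2
  rcases lt_trichotomy c d with h | h | h
  · exact absurd hcd (hinc c d h (htied d hd hdp).le).2
  · exact h
  · exact absurd hdc (hinc d c h (htied c hc hcp).le).2

/-- When the plateau lies to the right of `p`, at most one other candidate ties with `p`. -/
lemma tiedCount_le_two_of_lt_plateau (htop : ∀ c, (y₁ ≤ c ∧ c ≤ y₂) ↔ TopCand v c)
    (hinc : ∀ a b, a < b → b ≤ y₁ → SPref v b a)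
    (hdec : ∀ a b, y₂ ≤ a → a < b → SPref v a b)
    (hv : IsWeakOrder v) (hp : p < y₁) : tiedCount v p ≤ 2 := by
  have htied : ∀ c, Indiff v c p → c ≠ p → y₂ < c := by
    intro c hc hcp
    by_contra! hcy
    rcases lt_or_ge c y₁ with h | h
    · rcases lt_or_gt_of_ne hcp with h' | h'
      · exact (hinc c p h' hp.le).2 hc.1
      · exact (hinc p c h' h.le).2 hc.2
    · have ht := (htop c).1 ⟨h, hcy⟩
      exact absurd ((htop p).2 fun x => hv.trans hc.2 (ht x)).1 (not_le.2 hp)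
  refine tiedCount_le_two fun c d hc hd hcp hdp => ?_
  have hcd : v c d := hv.trans hc.1 hd.2
  have hdc : v d c := hv.trans hd.1 hc.2
  rcases lt_trichotomy c d with h | h | h
  · exact absurd hdc (hdec c d (htied c hc hcp).le h).2
  · exact h
  · exact absurd hcd (hdec d c (htied d hd hdp).le h).2

end Plateau

/-- Candidates are `Fin m` with `m = m1 + m2 + 1`, the axis is the natural
order on `Fin m`, the preferred candidate `p` is at axis position `m1`, candidate `a_i`
is at position `m1 - i` (for `1 ≤ i ≤ m1`) and `b_j` at position `m1 + j` (for
`1 ≤ j ≤ m2`).  If the scoring vector `α` satisfies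
`(α 1 - α i)(α 1 - α j) ≤ (α i - α (i+1))(α j - α (j+1))` for all `1 < i ≤ m1 + 1` and
`1 < j ≤ m2 + 1`, then for every weighted profile `S` of single-plateaued weak orders,
either every `a_i` scores at most `p`, or every `b_j` scores at most `p` (for any of
the four scoring-rule extensions). -/
theorem singlePlateaued_one_side_bounded_by_p
    (m1 m2 m : ℕ) (hm1 : 1 ≤ m1) (hm2 : 1 ≤ m2) (hm : m = m1 + m2 + 1)
    (α : ℕ → ℕ) (hα : IsScoringVec m α)
    (hcond : ∀ i j : ℕ, 1 < i → i ≤ m1 + 1 → 1 < j → j ≤ m2 + 1 →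
      (α 1 - α i) * (α 1 - α j) ≤ (α i - α (i + 1)) * (α j - α (j + 1)))
    (E : ScoreExt)
    (S : List (ℕ × (Fin m → Fin m → Prop)))
    (hS : ∀ wv ∈ S, 0 < wv.1 ∧ IsWeakOrder wv.2 ∧
      IsSinglePlateaued (inferInstance : LinearOrder (Fin m)) wv.2) :
    (∀ i : ℕ, ∀ _hi1 : 1 ≤ i, ∀ _hi2 : i ≤ m1,
      profScore m α E S (⟨m1 - i, by omega⟩ : Fin m) ≤
        profScore m α E S (⟨m1, by omega⟩ : Fin m)) ∨
    (∀ j : ℕ, ∀ _hj1 : 1 ≤ j, ∀ _hj2 : j ≤ m2,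
      profScore m α E S (⟨m1 + j, by omega⟩ : Fin m) ≤
        profScore m α E S (⟨m1, by omega⟩ : Fin m)) := by
  have hC : Fintype.card (Fin m) = m := Fintype.card_fin m
  have hA : ∀ i, 1 < i → i ≤ m → (0 : ℚ) ≤ (α 1 : ℚ) - α i := fun i h h' =>
    sub_nonneg.2 (by exact_mod_cast hα 1 i le_rfl h.le h')
  have hG : ∀ i, 1 < i → i + 1 ≤ m → (0 : ℚ) ≤ (α i : ℚ) - α (i + 1) := fun i h h' =>
    sub_nonneg.2 (by exact_mod_cast hα i (i + 1) h.le (by omega) h')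
  have hcond' : ∀ i j : ℕ, 1 < i → i ≤ m1 + 1 → 1 < j → j ≤ m2 + 1 →
      ((α 1 : ℚ) - α i) * ((α 1 : ℚ) - α j) ≤
        ((α i : ℚ) - α (i + 1)) * ((α j : ℚ) - α (j + 1)) := by
    intro i j hi hi' hj hj'
    have h := hcond i j hi hi' hj hj'
    have h1 := hα 1 i le_rfl hi.le (by omega)
    have h2 := hα 1 j le_rfl hj.le (by omega)
    have h3 := hα i (i + 1) hi.le (by omega) (by omega)
    have h4 := hα j (j + 1) hj.le (by omega) (by omega)
    rw [← Nat.cast_sub h1, ← Nat.cast_sub h2, ← Nat.cast_sub h3, ← Nat.cast_sub h4]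
    exact_mod_cast h
  let gap : ℕ → ℚ × ℚ := fun i => ((α 1 : ℚ) - α i, (α i : ℚ) - α (i + 1))
  let P : Set (ℚ × ℚ) := {q | ∃ j, 1 < j ∧ j ≤ m2 + 1 ∧ q = gap j}
  have hleft : ∀ i, 1 < i → i ≤ m1 + 1 → gap i ∈ crossPolar P := by
    intro i hi hi'
    refine ⟨hA i hi (by omega), hG i hi (by omega), ?_⟩
    rintro _ ⟨j, hj, hj', rfl⟩
    exact hcond' i j hi hi' hj hj'
  have hright : ∀ j, 1 < j → j ≤ m2 + 1 → gap j ∈ crossPolar (crossPolar P) := by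
    intro j hj hj'
    refine ⟨hA j hj (by omega), hG j hj (by omega), fun q hq => ?_⟩
    have := hq.2.2 _ ⟨j, hj, hj', rfl⟩
    linarith
  by_contra hcon
  push Not at hcon
  obtain ⟨⟨i, hi1, hi2, hi⟩, j, hj1, hj2, hj⟩ := hcon
  set p : Fin m := ⟨m1, by omega⟩ with hpdef
  set a : Fin m := ⟨m1 - i, by omega⟩
  set b : Fin m := ⟨m1 + j, by omega⟩
  have hap : a < p := Fin.mk_lt_mk.2 (by omega)
  have hpb : p < b := Fin.mk_lt_mk.2 (by omega)
  have hsum := weighted_sum_nonpos_or P S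
    (fun v => extScore m α E v a - extScore m α E v p)
    (fun v => extScore m α E v b - extScore m α E v p) ?_
  · rw [← profScore_sub, ← profScore_sub] at hsum
    rcases hsum with h | h <;> linarith
  intro s hs
  obtain ⟨-, hv, y₁, y₂, -, htop, hinc, hdec⟩ := hS s hs
  rcases lt_or_ge y₂ p with h2 | h2
  · refine Or.inr (Or.inl ?_)
    obtain ⟨k, k', hk, hk', hx, hy⟩ := exists_positions_of_not_top (p := p) (d := b) (M := m1)
      (B := Finset.Ioi p) hα hv hC E
      (fun c hc => hdec p c h2.le (Finset.mem_Ioi.1 hc))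
      (fun c hc d hd hcd => (lt_or_gt_of_ne hcd).imp
        (fun h => hdec c d (h2.trans (Finset.mem_Ioi.1 hc)).le h)
        (fun h => hdec d c (h2.trans (Finset.mem_Ioi.1 hd)).le h))
      (by rw [Fin.card_Ioi]; simp only [hpdef]; omega)
      (tiedCount_le_two_of_plateau_lt htop hinc hdec hv h2)
      (hdec y₂ p le_rfl h2) a (hdec p b h2.le hpb)
    refine ⟨_, smul_mem_crossPolar (w := 1 / 2) (by norm_num)
      (add_mem_crossPolar (hleft k hk.1 hk.2) (hleft k' hk'.1 hk'.2)), ?_, ?_⟩ <;>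
      simp [gap] <;> linarith
  rcases lt_or_ge p y₁ with h1 | h1
  · refine Or.inr (Or.inr ?_)
    obtain ⟨k, k', hk, hk', hx, hy⟩ := exists_positions_of_not_top (p := p) (d := a) (M := m2)
      (B := Finset.Iio p) hα hv hC E
      (fun c hc => hinc c p (Finset.mem_Iio.1 hc) h1.le)
      (fun c hc d hd hcd => (lt_or_gt_of_ne hcd).symm.imp
        (fun h => hinc d c h ((Finset.mem_Iio.1 hc).trans h1).le)
        (fun h => hinc c d h ((Finset.mem_Iio.1 hd).trans h1).le))
      (by rw [Fin.card_Iio]; simp only [hpdef]; omega)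
      (tiedCount_le_two_of_lt_plateau htop hinc hdec hv h1)
      (hinc p y₁ h1 le_rfl) b (hinc a p hap h1.le)
    refine ⟨_, smul_mem_crossPolar (w := 1 / 2) (by norm_num)
      (add_mem_crossPolar (hright k hk.1 hk.2) (hright k' hk'.1 hk'.2)), ?_, ?_⟩ <;>
      simp [gap] <;> linarith
  · have ht : TopCand s.2 p := (htop p).1 ⟨h1, h2⟩
    exact Or.inl ⟨sub_nonpos.2 (extScore_le_of_topCand hα hv hC E ht a),
      sub_nonpos.2 (extScore_le_of_topCand hα hv hC E ht b)⟩
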